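/- There exists a k-algebra automorphism φ of B (the Nagata automorphism) such that φ(x) = x + 2yw + zw², φ(y) = y + zw, φ(z) = z, and moreover φ is the exponential of D: for every f ∈ B and every m ∈ ℕ with D^m(f) = 0, one has φ(f) = Σ_{n < m} D^n(f)/n!. -/

import Mathlib

open MvPolynomial

/-!
For a locally nilpotent derivation `D` of a commutative `ℚ`-algebra, the flow `exp(tD)` sends `f` to
a polynomial in `t`. Its `t`-derivative is the flow of `D f`, and comparing coefficients in this
equation shows that the flow is multiplicative and that running it from time `b` is the Taylor shift
by `b`. Evaluating at `t = c` therefore gives a one-parameter group of automorphisms `exp(cD)`. The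
Nagata automorphism is the value at `t = 1` for `D = w • ∂`, where `w` is a constant of `∂`.
-/

theorem iterate_eq_zero_of_le {M F : Type*} [Zero M] [FunLike F M M] [ZeroHomClass F M M] {T : F}
    {f : M} {m n : ℕ} (hf : T^[m] f = 0) (hmn : m ≤ n) : T^[n] f = 0 := by
  obtain ⟨j, rfl⟩ := Nat.exists_eq_add_of_le' hmn
  rw [Function.iterate_add_apply, hf, iterate_map_zero]

section IterateDerivation

variable {R A : Type*} [CommSemiring R] [CommSemiring A] [Algebra R A] {D : Derivation R A A}

theorem iterate_derivation_mul_eq_zero {f g : A} {m n : ℕ} (hf : D^[m] f = 0)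
    (hg : D^[n] g = 0) : D^[m + n] (f * g) = 0 := by
  induction m generalizing f g n with
  | zero => rw [show f = 0 from hf, zero_mul, iterate_map_zero]
  | succ m ihm =>
    induction n generalizing g with
    | zero => rw [show g = 0 from hg, mul_zero, iterate_map_zero]
    | succ n ihn =>
      have h_left : D^[m + 1 + n] (f * D g) = 0 := ihn hg
      have h_right : D^[m + 1 + n] (g * D f) = 0 := by
        rw [mul_comm, add_right_comm]
        exact ihm hf hg
      rw [← add_assoc, Function.iterate_succ_apply, D.leibniz, smul_eq_mul, smul_eq_mul,
        iterate_map_add, h_left, h_right, add_zero]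

theorem iterate_smul_derivation_apply {w : A} (hw : D w = 0) (n : ℕ) (f : A) :
    (w • D)^[n] f = w ^ n * D^[n] f := by
  have h_pow (n : ℕ) : D (w ^ n) = 0 := by rw [D.leibniz_pow, hw, smul_zero, smul_zero]
  induction n with
  | zero => simp
  | succ n ih =>
    rw [Function.iterate_succ_apply', ih, Derivation.smul_apply, D.leibniz, h_pow, smul_zero,
      add_zero, smul_eq_mul, smul_eq_mul, ← mul_assoc, ← pow_succ', Function.iterate_succ_apply']

variable (D) in
/-- A derivation is locally nilpotent if each element is killed by some power of it. This is the
hypothesis under which the exponential series of `D` is a finite sum at each element. -/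
def IsLocallyNilpotent : Prop :=
  ∀ f, ∃ n, D^[n] f = 0

namespace IsLocallyNilpotent

theorem of_adjoin_eq_top {s : Set A} (hs : Algebra.adjoin R s = ⊤)
    (h : ∀ f ∈ s, ∃ n, D^[n] f = 0) : IsLocallyNilpotent D := by
  intro f
  induction (hs ▸ Algebra.mem_top : f ∈ Algebra.adjoin R s) using Algebra.adjoin_induction with
  | mem f hf => exact h f hf
  | algebraMap r => exact ⟨1, D.map_algebraMap r⟩
  | add f g _ _ hf hg =>
    obtain ⟨m, hm⟩ := hf
    obtain ⟨n, hn⟩ := hg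
    refine ⟨max m n, ?_⟩
    rw [iterate_map_add, iterate_eq_zero_of_le hm (le_max_left m n),
      iterate_eq_zero_of_le hn (le_max_right m n), add_zero]
  | mul f g _ _ hf hg =>
    obtain ⟨m, hm⟩ := hf
    obtain ⟨n, hn⟩ := hg
    exact ⟨m + n, iterate_derivation_mul_eq_zero hm hn⟩

theorem smul (hD : IsLocallyNilpotent D) {w : A} (hw : D w = 0) : IsLocallyNilpotent (w • D) := by
  intro f
  obtain ⟨n, hn⟩ := hD f
  exact ⟨n, by rw [iterate_smul_derivation_apply hw, hn, mul_zero]⟩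

end IsLocallyNilpotent

end IterateDerivation

namespace IsLocallyNilpotent

section Flow

variable {R A : Type*} [CommRing R] [CommRing A] [Algebra R A] [Algebra ℚ A]
  {D : Derivation R A A} (hD : IsLocallyNilpotent D)

theorem coeff_sum_monomial_iterate {f : A} {m : ℕ} (hf : D^[m] f = 0) (n : ℕ) :
    (∑ i ∈ Finset.range m,
      Polynomial.monomial i ((i.factorial : ℚ)⁻¹ • D^[i] f)).coeff n =
        (n.factorial : ℚ)⁻¹ • D^[n] f := by
  simp only [Polynomial.finsetSum_coeff, Polynomial.coeff_monomial, Finset.sum_ite_eq',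
    Finset.mem_range, ite_eq_left_iff, not_lt]
  intro hmn
  rw [iterate_eq_zero_of_le hf hmn, smul_zero]

/-- The series `exp(tD) f` as a polynomial in `t`, truncated at some power of `D` that kills `f`;
see `flow` for the resulting algebra homomorphism. -/
noncomputable def flowPolynomial (f : A) : Polynomial A :=
  ∑ n ∈ Finset.range (hD f).choose, Polynomial.monomial n ((n.factorial : ℚ)⁻¹ • D^[n] f)

theorem coeff_flowPolynomial (f : A) (n : ℕ) :
    (hD.flowPolynomial f).coeff n = (n.factorial : ℚ)⁻¹ • D^[n] f :=
  coeff_sum_monomial_iterate (hD f).choose_spec n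

theorem flowPolynomial_add (f g : A) :
    hD.flowPolynomial (f + g) = hD.flowPolynomial f + hD.flowPolynomial g := by
  ext n
  simp only [Polynomial.coeff_add, coeff_flowPolynomial, iterate_map_add, smul_add]

theorem flowPolynomial_of_apply_eq_zero {f : A} (hf : D f = 0) :
    hD.flowPolynomial f = Polynomial.C f := by
  ext n
  cases n with
  | zero => simp [coeff_flowPolynomial]
  | succ n => simp [coeff_flowPolynomial, hf]

theorem derivative_flowPolynomial (f : A) :
    Polynomial.derivative (hD.flowPolynomial f) = hD.flowPolynomial (D f) := by
  ext n
  have h_factorial : ((n + 1).factorial : ℚ)⁻¹ * (n + 1 : ℕ) = (n.factorial : ℚ)⁻¹ := by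
    rw [Nat.factorial_succ]
    push_cast
    field_simp
  rw [Polynomial.coeff_derivative, coeff_flowPolynomial, coeff_flowPolynomial,
    Function.iterate_succ_apply, ← h_factorial, mul_smul, Nat.cast_smul_eq_nsmul, nsmul_eq_mul,
    smul_mul_assoc, mul_comm]
  push_cast
  rfl

theorem flowPolynomial_mul (f g : A) :
    hD.flowPolynomial (f * g) = hD.flowPolynomial f * hD.flowPolynomial g := by
  have : IsAddTorsionFree A := .of_module_rat A
  ext n
  induction n generalizing f g with
  | zero => simp [coeff_flowPolynomial, Polynomial.mul_coeff_zero]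
  | succ n ih =>
    have h_derivative : (Polynomial.derivative (hD.flowPolynomial (f * g))).coeff n =
        (Polynomial.derivative (hD.flowPolynomial f * hD.flowPolynomial g)).coeff n := by
      simp only [derivative_flowPolynomial, Polynomial.derivative_mul, D.leibniz, smul_eq_mul,
        flowPolynomial_add, Polynomial.coeff_add, ih]
      rw [mul_comm (hD.flowPolynomial g), add_comm]
    simpa only [Polynomial.coeff_derivative, ← Nat.cast_add_one, ← nsmul_eq_mul',
      nsmul_right_inj n.succ_ne_zero] using h_derivative

/-- The flow `exp(tD)` of `D`, with the time `t` as polynomial variable. -/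
noncomputable def flow : A →ₐ[R] Polynomial A where
  toFun := hD.flowPolynomial
  map_one' := by rw [hD.flowPolynomial_of_apply_eq_zero D.map_one_eq_zero, map_one]
  map_mul' := hD.flowPolynomial_mul
  map_zero' := by rw [hD.flowPolynomial_of_apply_eq_zero (map_zero D), map_zero]
  map_add' := hD.flowPolynomial_add
  commutes' r := hD.flowPolynomial_of_apply_eq_zero (D.map_algebraMap r)

theorem coeff_flow (f : A) (n : ℕ) : (hD.flow f).coeff n = (n.factorial : ℚ)⁻¹ • D^[n] f :=
  hD.coeff_flowPolynomial f n

theorem iterate_derivative_flow (f : A) (n : ℕ) :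
    Polynomial.derivative^[n] (hD.flow f) = hD.flow (D^[n] f) :=
  ((Function.Semiconj.iterate_right (f := hD.flow) fun f ↦
    (hD.derivative_flowPolynomial f).symm) n f).symm

theorem hasseDeriv_flow (f : A) (n : ℕ) :
    Polynomial.hasseDeriv n (hD.flow f) = (n.factorial : ℚ)⁻¹ • hD.flow (D^[n] f) := by
  rw [← iterate_derivative_flow, ← Polynomial.factorial_smul_hasseDeriv, LinearMap.smul_apply,
    ← Nat.cast_smul_eq_nsmul ℚ, inv_smul_smul₀ (mod_cast n.factorial_ne_zero)]

/-- The exponential `exp(cD)`, i.e. the flow of `D` at time `c`. -/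
noncomputable def expMap (c : R) : A →ₐ[R] A :=
  ((Polynomial.aeval (algebraMap R A c)).restrictScalars R).comp hD.flow

theorem expMap_apply (c : R) (f : A) :
    hD.expMap c f = (hD.flow f).eval (algebraMap R A c) := by
  rw [← Polynomial.coe_aeval_eq_eval]
  rfl

theorem expMap_apply_eq_sum (c : R) {f : A} {m : ℕ} (hf : D^[m] f = 0) :
    hD.expMap c f = ∑ n ∈ Finset.range m, c ^ n • (n.factorial : ℚ)⁻¹ • D^[n] f := by
  have h_flow : hD.flow f =
      ∑ n ∈ Finset.range m, Polynomial.monomial n ((n.factorial : ℚ)⁻¹ • D^[n] f) := by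
    ext n
    rw [coeff_flow, coeff_sum_monomial_iterate hf]
  rw [expMap_apply, h_flow, Polynomial.eval_finsetSum]
  refine Finset.sum_congr rfl fun n _ ↦ ?_
  rw [Polynomial.eval_monomial, ← map_pow, mul_comm, ← Algebra.smul_def]

theorem apply_expMap (c : R) (f : A) : D (hD.expMap c f) = hD.expMap c (D f) := by
  obtain ⟨m, hm⟩ := hD f
  have hm' : D^[m] (D f) = 0 := by
    rw [← Function.iterate_succ_apply, Function.iterate_succ_apply', hm, map_zero]
  simp only [hD.expMap_apply_eq_sum c hm, hD.expMap_apply_eq_sum c hm', map_sum, D.map_smul,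
    map_rat_smul, ← Function.iterate_succ_apply, Function.iterate_succ_apply']

theorem flow_expMap (c : R) (f : A) :
    hD.flow (hD.expMap c f) = Polynomial.taylor (algebraMap R A c) (hD.flow f) := by
  ext n
  have h_iterate : D^[n] (hD.expMap c f) = hD.expMap c (D^[n] f) :=
    (Function.Semiconj.iterate_right (fun f ↦ (hD.apply_expMap c f).symm) n f).symm
  rw [Polynomial.taylor_coeff, hasseDeriv_flow, Polynomial.eval_smul, coeff_flow, h_iterate,
    expMap_apply]

theorem expMap_zero : hD.expMap 0 = AlgHom.id R A := by
  ext f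
  rw [expMap_apply, map_zero, ← Polynomial.coeff_zero_eq_eval_zero, coeff_flow]
  simp

theorem expMap_add (b c : R) : hD.expMap (b + c) = (hD.expMap b).comp (hD.expMap c) := by
  ext f
  rw [AlgHom.comp_apply, expMap_apply, expMap_apply, flow_expMap, Polynomial.taylor_eval, map_add]

/-- The automorphism `exp D`, with inverse `exp(-D)`. -/
noncomputable def expEquiv : A ≃ₐ[R] A :=
  .ofAlgHom (hD.expMap 1) (hD.expMap (-1))
    (by rw [← expMap_add, add_neg_cancel, expMap_zero])
    (by rw [← expMap_add, neg_add_cancel, expMap_zero])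

theorem expEquiv_apply_eq_sum {f : A} {m : ℕ} (hf : D^[m] f = 0) :
    hD.expEquiv f = ∑ n ∈ Finset.range m, (n.factorial : ℚ)⁻¹ • D^[n] f :=
  (hD.expMap_apply_eq_sum 1 hf).trans (by simp only [one_pow, one_smul])

theorem expEquiv_smul_apply_eq_sum {w f : A} (hw : D w = 0) {m : ℕ} (hf : D^[m] f = 0) :
    (hD.smul hw).expEquiv f =
      ∑ n ∈ Finset.range m, (n.factorial : ℚ)⁻¹ • (w ^ n * D^[n] f) := by
  have hf' : (w • D)^[m] f = 0 := by rw [iterate_smul_derivation_apply hw, hf, mul_zero]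
  simp only [expEquiv_apply_eq_sum _ hf', iterate_smul_derivation_apply hw]

end Flow

end IsLocallyNilpotent

theorem derivation_sq_sub_mul_eq_zero {R A : Type*} [CommSemiring R] [CommRing A] [Algebra R A]
    {d : Derivation R A A} {x y z : A} (hx : d x = 2 * y) (hy : d y = z) (hz : d z = 0) :
    d (y ^ 2 - x * z) = 0 := by
  simp only [map_sub, pow_two, d.leibniz, hx, hy, hz, smul_eq_mul]
  ring

theorem nagata_automorphism_general {R : Type*} [CommRing R] [Algebra ℚ R]
    (d : Derivation R (MvPolynomial (Fin 3) R) (MvPolynomial (Fin 3) R))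
    (hdx : d (X 0) = 2 * X 1) (hdy : d (X 1) = X 2) (hdz : d (X 2) = 0)
    {w : MvPolynomial (Fin 3) R} (hw : d w = 0) :
    ∃ φ : MvPolynomial (Fin 3) R ≃ₐ[R] MvPolynomial (Fin 3) R,
      φ (X 0) = X 0 + 2 * X 1 * w + X 2 * w ^ 2 ∧
      φ (X 1) = X 1 + X 2 * w ∧
      φ (X 2) = X 2 ∧
      ∀ (f : MvPolynomial (Fin 3) R) (m : ℕ), (w • d)^[m] f = 0 →
        φ f = ∑ n ∈ Finset.range m, (n.factorial : ℚ)⁻¹ • (w • d)^[n] f := by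
  have h_iterate_two_x : d^[2] (X 0) = 2 * X 2 := by simp [hdx, hdy, two_mul]
  have h_iterate_three_x : d^[3] (X 0) = 0 := by simp [hdx, hdy, hdz, two_mul]
  have h_iterate_two_y : d^[2] (X 1) = 0 := by simp [hdy, hdz]
  have hd : IsLocallyNilpotent d := by
    refine .of_adjoin_eq_top adjoin_range_X ?_
    rintro _ ⟨i, rfl⟩
    fin_cases i
    exacts [⟨3, h_iterate_three_x⟩, ⟨2, h_iterate_two_y⟩, ⟨1, hdz⟩]
  refine ⟨(hd.smul hw).expEquiv, ?_, ?_, ?_, fun f m hf ↦ (hd.smul hw).expEquiv_apply_eq_sum hf⟩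
  · have h_half : (2 : ℚ)⁻¹ • (w ^ 2 * (2 * X 2)) = X 2 * w ^ 2 := by
      rw [two_mul, ← two_smul ℚ (X 2), mul_smul_comm, inv_smul_smul₀ two_ne_zero, mul_comm]
    rw [hd.expEquiv_smul_apply_eq_sum hw h_iterate_three_x, Finset.sum_range_succ,
      h_iterate_two_x, Nat.factorial_two, Nat.cast_ofNat, h_half]
    simp [Finset.sum_range_succ, hdx, mul_comm w]
  · rw [hd.expEquiv_smul_apply_eq_sum hw h_iterate_two_y]
    simp [Finset.sum_range_succ, hdy, mul_comm]
  · rw [hd.expEquiv_smul_apply_eq_sum hw (m := 1) hdz]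
    simp

/-- The Nagata automorphism of `k[x,y,z]` exists and is the exponential of the locally
nilpotent derivation `D = w • ∂`. -/
theorem nagata_automorphism (k : Type*) [Field k] [CharZero k]
    (d D : Derivation k (MvPolynomial (Fin 3) k) (MvPolynomial (Fin 3) k))
    (hdx : d (X (0 : Fin 3)) = 2 * X (1 : Fin 3))
    (hdy : d (X (1 : Fin 3)) = X (2 : Fin 3))
    (hdz : d (X (2 : Fin 3)) = 0)
    (w : MvPolynomial (Fin 3) k)
    (hw : w = X (1 : Fin 3) ^ 2 - X (0 : Fin 3) * X (2 : Fin 3))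
    (hD : ∀ f : MvPolynomial (Fin 3) k, D f = w * d f)
    (hln : ∀ f : MvPolynomial (Fin 3) k, ∃ m : ℕ, (⇑D)^[m] f = 0) :
    ∃ φ : MvPolynomial (Fin 3) k ≃ₐ[k] MvPolynomial (Fin 3) k,
      φ (X (0 : Fin 3)) = X (0 : Fin 3) + 2 * X (1 : Fin 3) * w + X (2 : Fin 3) * w ^ 2 ∧
      φ (X (1 : Fin 3)) = X (1 : Fin 3) + X (2 : Fin 3) * w ∧
      φ (X (2 : Fin 3)) = X (2 : Fin 3) ∧
      ∀ (f : MvPolynomial (Fin 3) k) (m : ℕ), (⇑D)^[m] f = 0 →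
        φ f = ∑ n ∈ Finset.range m, (n.factorial : k)⁻¹ • (⇑D)^[n] f := by
  obtain rfl : D = w • d := Derivation.ext hD
  have hdw : d w = 0 := hw ▸ derivation_sq_sub_mul_eq_zero hdx hdy hdz
  simpa only [inv_natCast_smul_eq k ℚ] using nagata_automorphism_general d hdx hdy hdz hdw
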